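/- Let μ and ν be probability measures on ℝⁿ with finite first moments, let f* : ℝⁿ → ℝ be a 1-Lipschitz function maximizing ∫ f dμ − ∫ f dν over all 1-Lipschitz f, and assume f* is differentiable everywhere. Let π* be a coupling of μ and ν minimizing ∫‖x−y‖ dπ. Then for π*-almost every pair (x, y) with x ≠ y and every t ∈ (0,1), the gradient of f* at x_t = t·x + (1−t)·y has Euclidean norm equal to 1. -/

import Mathlib

open MeasureTheory

/-!
Differentiating `f` along the segment from `y` to `x` shows that its derivative has norm one there
as soon as `f x - f y = ‖x - y‖`, because a `1`-Lipschitz function with this property is affine with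
slope `‖x - y‖` on the segment. It remains to see that the optimal critic satisfies
`f x - f y = ‖x - y‖` almost everywhere for the optimal coupling `π`.

This is complementary slackness. Exchanging small pieces of mass around finitely many points of the
support of `π` cannot lower the cost, so the support is cyclically monotone. The infimum of the
costs of chains in the support is then a `1`-Lipschitz function `g` with `g x - g y = ‖x - y‖` on
the support. As `f` is optimal, `∫ (f x - f y) dπ ≥ ∫ (g x - g y) dπ = ∫ ‖x - y‖ dπ`, while
`f x - f y ≤ ‖x - y‖` pointwise.
-/

section CyclicalMonotonicity

variable {X Y : Type*} {c : X × Y → ℝ} {Γ : Set (X × Y)}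

/-- Cyclical monotonicity of a set of pairs with respect to a cost `c`: re-pairing finitely many of
its elements by a permutation does not lower the total cost. This is the combinatorial form of the
optimality of a transport plan supported in `Γ`. -/
def IsCyclicallyMonotone (c : X × Y → ℝ) (Γ : Set (X × Y)) : Prop :=
  ∀ (n : ℕ) (p : Fin n → X × Y) (σ : Equiv.Perm (Fin n)), (∀ i, p i ∈ Γ) →
    ∑ i, c (p i) ≤ ∑ i, c ((p (σ i)).1, (p i).2)

/-- The cost of a chain of pairs `p 0, …, p k` with free end `z`, the quantity minimized in
Rockafellar's construction of a potential: the second entry of each pair is joined to the first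
entry of the next one, that of the last pair is joined to `z`, and the costs of the pairs
themselves are refunded. -/
def chainCost (c : X × Y → ℝ) {k : ℕ} (p : Fin (k + 1) → X × Y) (z : X) : ℝ :=
  c (z, (p (Fin.last k)).2) + ∑ i : Fin k, c ((p i.succ).1, (p i.castSucc).2) - ∑ i, c (p i)

lemma chainCost_snoc {k : ℕ} (p : Fin (k + 1) → X × Y) (q : X × Y) (z : X) :
    chainCost c (Fin.snoc p q : Fin (k + 2) → X × Y) z =
      chainCost c p q.1 + (c (z, q.2) - c q) := by
  simp only [chainCost, Fin.sum_univ_castSucc, Fin.snoc_last, Fin.snoc_castSucc, Fin.succ_last,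
    Fin.succ_castSucc]
  ring

lemma IsCyclicallyMonotone.chainCost_nonneg (hΓ : IsCyclicallyMonotone c Γ) {k : ℕ}
    {p : Fin (k + 1) → X × Y} (hp : ∀ i, p i ∈ Γ) : 0 ≤ chainCost c p (p 0).1 := by
  have rotated := hΓ (k + 1) p (finRotate (k + 1)) hp
  rw [Fin.sum_univ_castSucc (fun i ↦ c ((p (finRotate (k + 1) i)).1, (p i).2))] at rotated
  simp only [finRotate_apply, Fin.coeSucc_eq_succ, Fin.last_add_one] at rotated
  rw [chainCost]
  linarith

end CyclicalMonotonicity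

section Potential

variable {X : Type*} [PseudoMetricSpace X] {Γ : Set (X × X)} {q₀ : X × X}

/-- The costs at `z` of the chains in `Γ` that start with `q₀`, for the distance cost. -/
def chainCosts (Γ : Set (X × X)) (q₀ : X × X) (z : X) : Set ℝ :=
  {r | ∃ (k : ℕ) (p : Fin (k + 1) → X × X), p 0 = q₀ ∧ (∀ i, p i ∈ Γ) ∧
    chainCost (fun p ↦ dist p.1 p.2) p z = r}

lemma chainCost_dist_le_add_dist {k : ℕ} (p : Fin (k + 1) → X × X) (z w : X) :
    chainCost (fun p ↦ dist p.1 p.2) p z ≤ chainCost (fun p ↦ dist p.1 p.2) p w + dist z w := by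
  have := dist_triangle z w (p (Fin.last k)).2
  simp only [chainCost]
  linarith

lemma chainCosts_nonempty (hq₀ : q₀ ∈ Γ) (z : X) : (chainCosts Γ q₀ z).Nonempty :=
  ⟨_, 0, fun _ ↦ q₀, rfl, fun _ ↦ hq₀, rfl⟩

lemma IsCyclicallyMonotone.bddBelow_chainCosts
    (hΓ : IsCyclicallyMonotone (fun p ↦ dist p.1 p.2) Γ) (z : X) :
    BddBelow (chainCosts Γ q₀ z) := by
  refine ⟨-dist q₀.1 z, ?_⟩
  rintro _ ⟨k, p, rfl, hp, rfl⟩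
  linarith [hΓ.chainCost_nonneg hp, chainCost_dist_le_add_dist p (p 0).1 z]

/-- The Kantorovich potential of `Γ` based at `q₀`: Rockafellar's infimum over chains, for the
distance cost. It is meaningful for cyclically monotone `Γ` containing `q₀`; otherwise the real
infimum may take its junk value `0`. -/
noncomputable def chainPotential (Γ : Set (X × X)) (q₀ : X × X) (z : X) : ℝ :=
  sInf (chainCosts Γ q₀ z)

lemma IsCyclicallyMonotone.lipschitzWith_chainPotential
    (hΓ : IsCyclicallyMonotone (fun p ↦ dist p.1 p.2) Γ) (hq₀ : q₀ ∈ Γ) :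
    LipschitzWith 1 (chainPotential Γ q₀) := by
  refine LipschitzWith.of_le_add fun z w ↦ sub_le_iff_le_add.1 ?_
  refine le_csInf (chainCosts_nonempty hq₀ w) ?_
  rintro _ ⟨k, p, hp₀, hp, rfl⟩
  have : chainPotential Γ q₀ z ≤ chainCost _ p z :=
    csInf_le (hΓ.bddBelow_chainCosts z) ⟨k, p, hp₀, hp, rfl⟩
  linarith [chainCost_dist_le_add_dist p z w]

lemma IsCyclicallyMonotone.dist_le_chainPotential_sub
    (hΓ : IsCyclicallyMonotone (fun p ↦ dist p.1 p.2) Γ) (hq₀ : q₀ ∈ Γ) {q : X × X} (hq : q ∈ Γ) :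
    dist q.1 q.2 ≤ chainPotential Γ q₀ q.1 - chainPotential Γ q₀ q.2 := by
  rw [le_sub_iff_add_le]
  refine le_csInf (chainCosts_nonempty hq₀ q.1) ?_
  rintro _ ⟨k, p, hp₀, hp, rfl⟩
  have snoc_mem : ∀ i, (Fin.snoc p q : Fin (k + 2) → X × X) i ∈ Γ :=
    Fin.lastCases (by simpa using hq) (by simpa using hp)
  have extended : chainPotential Γ q₀ q.2 ≤ chainCost _ (Fin.snoc p q : Fin (k + 2) → X × X) q.2 :=
    csInf_le (hΓ.bddBelow_chainCosts q.2)
      ⟨k + 1, Fin.snoc p q, by rw [Fin.snoc_apply_zero, hp₀], snoc_mem, rfl⟩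
  rw [chainCost_snoc, dist_self] at extended
  linarith

lemma sub_le_dist_of_lipschitzWith_one {f : X → ℝ} (hf : LipschitzWith 1 f) (x y : X) :
    f x - f y ≤ dist x y := by
  simpa [sub_le_iff_le_add, add_comm] using hf.le_add_mul x y

theorem IsCyclicallyMonotone.exists_lipschitzWith_sub_eq_dist
    (hΓ : IsCyclicallyMonotone (fun p ↦ dist p.1 p.2) Γ) :
    ∃ g : X → ℝ, LipschitzWith 1 g ∧ ∀ p ∈ Γ, g p.1 - g p.2 = dist p.1 p.2 := by
  obtain rfl | ⟨q₀, hq₀⟩ := Γ.eq_empty_or_nonempty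
  · exact ⟨fun _ ↦ 0, LipschitzWith.const' 0, by simp⟩
  · have hg := hΓ.lipschitzWith_chainPotential hq₀
    exact ⟨chainPotential Γ q₀, hg, fun p hp ↦
      (sub_le_dist_of_lipschitzWith_one hg _ _).antisymm (hΓ.dist_le_chainPotential_sub hq₀ hp)⟩

end Potential

section OptimalPlan

variable {X Y : Type*} [MeasurableSpace X] [MeasurableSpace Y] {c : X × Y → ℝ}
  {π : Measure (X × Y)}

/-- Optimality of `π` among the transport plans with the same marginals. Only competitors of
finite cost are considered, since the Bochner integral of a non-integrable cost is the junk value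
`0`. -/
def IsOptimalPlan (c : X × Y → ℝ) (π : Measure (X × Y)) : Prop :=
  ∀ π' : Measure (X × Y), π'.fst = π.fst → π'.snd = π.snd → Integrable c π' →
    ∫ p, c p ∂π ≤ ∫ p, c p ∂π'

lemma IsOptimalPlan.of_le (hπ : IsOptimalPlan c π) (hc : Integrable c π) {ρ : Measure (X × Y)}
    [IsFiniteMeasure ρ] (hρ : ρ ≤ π) : IsOptimalPlan c ρ := by
  intro ρ' hfst hsnd hcρ'
  have hdecomp : π - ρ + ρ = π := Measure.sub_add_cancel_of_le hρ
  have hcsub : Integrable c (π - ρ) := hc.mono_measure Measure.sub_le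
  have competitor := hπ (π - ρ + ρ')
    (by rw [Measure.fst_add, hfst, ← Measure.fst_add, hdecomp])
    (by rw [Measure.snd_add, hsnd, ← Measure.snd_add, hdecomp])
    (hcsub.add_measure hcρ')
  nth_rw 1 [← hdecomp] at competitor
  rwa [integral_add_measure hcsub (hc.mono_measure hρ), integral_add_measure hcsub hcρ',
    add_le_add_iff_left] at competitor

lemma IsOptimalPlan.of_smul {a : ENNReal} (ha₀ : a ≠ 0) (ha : a ≠ ⊤)
    (hπ : IsOptimalPlan c (a • π)) : IsOptimalPlan c π := by
  intro π' hfst hsnd hcπ'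
  have scaled := hπ (a • π') (by simp only [Measure.fst, Measure.map_smul] at hfst ⊢; rw [hfst])
    (by simp only [Measure.snd, Measure.map_smul] at hsnd ⊢; rw [hsnd]) (hcπ'.smul_measure ha)
  rw [integral_smul_measure, integral_smul_measure] at scaled
  exact le_of_mul_le_mul_left scaled (ENNReal.toReal_pos ha₀ ha)

variable {ι : Type*} [Fintype ι]

lemma IsOptimalPlan.sum_integral_le_sum_integral_prod {P : ι → Measure (X × Y)}
    [∀ i, IsProbabilityMeasure (P i)] (hP : IsOptimalPlan c (∑ i, P i)) (σ : Equiv.Perm ι)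
    (hc : ∀ i, Integrable c (P i)) (hcσ : ∀ i, Integrable c ((P (σ i)).fst.prod (P i).snd)) :
    ∑ i, ∫ p, c p ∂P i ≤ ∑ i, ∫ p, c p ∂(P (σ i)).fst.prod (P i).snd := by
  rw [← integral_finsetSum_measure fun i _ ↦ hc i, ← integral_finsetSum_measure fun i _ ↦ hcσ i]
  refine hP _ ?_ ?_ (integrable_finsetSum_measure.2 fun i _ ↦ hcσ i)
  · simp only [← Measure.sum_fintype, Measure.fst_sum, Measure.fst_prod]
    simpa only [Measure.sum_fintype] using Equiv.sum_comp σ fun i ↦ (P i).fst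
  · simp only [← Measure.sum_fintype, Measure.snd_sum, Measure.snd_prod]

end OptimalPlan

section CondApproximation

variable {Ω : Type*} [MeasurableSpace Ω]

lemma exists_smul_sum_cond_le {ι : Type*} [Fintype ι] (μ : Measure Ω) {A : ι → Set Ω}
    (hA : ∀ i, μ (A i) ≠ 0) :
    ∃ a : ENNReal, a ≠ 0 ∧ a ≠ ⊤ ∧ a • ∑ i, ProbabilityTheory.cond μ (A i) ≤ μ := by
  set b : ENNReal := 1 + ∑ i, (μ (A i))⁻¹ with hb
  have hb_top : b ≠ ⊤ := by simp [hb, ENNReal.sum_eq_top, hA]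
  refine ⟨b⁻¹, ENNReal.inv_ne_zero.2 hb_top, ENNReal.inv_ne_top.2 (by simp [hb]), ?_⟩
  calc b⁻¹ • ∑ i, ProbabilityTheory.cond μ (A i)
      ≤ b⁻¹ • ∑ i, (μ (A i))⁻¹ • μ := by
        unfold ProbabilityTheory.cond
        gcongr with i
        exact Measure.restrict_le_self
    _ = (b⁻¹ * ∑ i, (μ (A i))⁻¹) • μ := by rw [← Finset.sum_smul, smul_smul]
    _ ≤ (b⁻¹ * b) • μ := by gcongr; exact le_add_self
    _ ≤ (1 : ENNReal) • μ := by gcongr; exact ENNReal.inv_mul_le_one b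
    _ = μ := one_smul _ _

variable {μ : Measure Ω} {h : Ω → ℝ} {r δ : ℝ}

lemma integrable_of_ae_abs_sub_le [IsFiniteMeasure μ] (hh : AEStronglyMeasurable h μ)
    (hr : ∀ᵐ ω ∂μ, |h ω - r| ≤ δ) : Integrable h μ := by
  simpa using (Integrable.of_bound (hh.sub aestronglyMeasurable_const) δ hr).add
    (integrable_const r)

lemma abs_integral_sub_le_of_ae_abs_sub_le [IsProbabilityMeasure μ] (hh : Integrable h μ)
    (hr : ∀ᵐ ω ∂μ, |h ω - r| ≤ δ) : |∫ ω, h ω ∂μ - r| ≤ δ := by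
  have hnorm : ∀ᵐ ω ∂μ, ‖h ω - r‖ ≤ δ := hr
  simpa [integral_sub hh (integrable_const r)] using norm_integral_le_of_norm_le_const hnorm

lemma ae_fst_prod_snd_mem_prod {X Y : Type*} [MeasurableSpace X] [MeasurableSpace Y]
    {P Q : Measure (X × Y)} {U : Set X} {V : Set Y} (hU : MeasurableSet U)
    (hV : MeasurableSet V) (hP : ∀ᵐ p ∂P, p.1 ∈ U) (hQ : ∀ᵐ p ∂Q, p.2 ∈ V) :
    ∀ᵐ p ∂P.fst.prod Q.snd, p ∈ U ×ˢ V := by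
  have hfst : ∀ᵐ x ∂P.fst, x ∈ U := (ae_map_iff measurable_fst.aemeasurable hU).2 hP
  have hsnd : ∀ᵐ y ∂Q.snd, y ∈ V := (ae_map_iff measurable_snd.aemeasurable hV).2 hQ
  exact (Measure.quasiMeasurePreserving_fst.ae hfst).and
    (Measure.quasiMeasurePreserving_snd.ae hsnd)

end CondApproximation

lemma IsOptimalPlan.sum_sub_le_sum_add_of_abs_sub_le {X Y ι : Type*} [MeasurableSpace X]
    [MeasurableSpace Y] [Fintype ι] {c : X × Y → ℝ} {π : Measure (X × Y)} [IsFiniteMeasure π]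
    (hπ : IsOptimalPlan c π) (hc : Integrable c π) (hcm : Measurable c)
    {U : ι → Set X} {V : ι → Set Y} (hU : ∀ i, MeasurableSet (U i))
    (hV : ∀ i, MeasurableSet (V i)) (hpos : ∀ i, π (U i ×ˢ V i) ≠ 0) {r : ι → ι → ℝ} {δ : ℝ}
    (hr : ∀ i j, ∀ q ∈ U i ×ˢ V j, |c q - r i j| ≤ δ) (σ : Equiv.Perm ι) :
    ∑ i, (r i i - δ) ≤ ∑ i, (r (σ i) i + δ) := by
  let P (i : ι) : Measure (X × Y) := ProbabilityTheory.cond π (U i ×ˢ V i)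
  have hP_prob (i : ι) : IsProbabilityMeasure (P i) :=
    ProbabilityTheory.cond_isProbabilityMeasure (hpos i)
  have hP_mem (i : ι) : ∀ᵐ q ∂P i, q ∈ U i ×ˢ V i :=
    ProbabilityTheory.ae_cond_mem ((hU i).prod (hV i))
  have hP_near (i : ι) : ∀ᵐ q ∂P i, |c q - r i i| ≤ δ := (hP_mem i).mono (hr i i)
  have hQ_near (i : ι) : ∀ᵐ q ∂(P (σ i)).fst.prod (P i).snd, |c q - r (σ i) i| ≤ δ :=
    (ae_fst_prod_snd_mem_prod (hU (σ i)) (hV i) ((hP_mem (σ i)).mono fun _ hq ↦ hq.1)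
      ((hP_mem i).mono fun _ hq ↦ hq.2)).mono (hr (σ i) i)
  have hcP (i : ι) := integrable_of_ae_abs_sub_le hcm.aestronglyMeasurable (hP_near i)
  have hcQ (i : ι) := integrable_of_ae_abs_sub_le hcm.aestronglyMeasurable (hQ_near i)
  have hP_opt : IsOptimalPlan c (∑ i, P i) := by
    obtain ⟨a, ha₀, ha, hle⟩ := exists_smul_sum_cond_le π hpos
    have := isFiniteMeasure_of_le π hle
    exact (hπ.of_le hc hle).of_smul ha₀ ha
  calc ∑ i, (r i i - δ) ≤ ∑ i, ∫ q, c q ∂P i := Finset.sum_le_sum fun i _ ↦ by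
        linarith [(abs_le.1 (abs_integral_sub_le_of_ae_abs_sub_le (hcP i) (hP_near i))).1]
    _ ≤ ∑ i, ∫ q, c q ∂(P (σ i)).fst.prod (P i).snd :=
        hP_opt.sum_integral_le_sum_integral_prod σ hcP hcQ
    _ ≤ ∑ i, (r (σ i) i + δ) := Finset.sum_le_sum fun i _ ↦ by
        linarith [(abs_le.1 (abs_integral_sub_le_of_ae_abs_sub_le (hcQ i) (hQ_near i))).2]

lemma exists_isOpen_forall_abs_sub_le {X Y ι : Type*} [TopologicalSpace X] [TopologicalSpace Y]
    [Finite ι] {c : X × Y → ℝ} (hc : Continuous c) (p : ι → X × Y) {δ : ℝ} (hδ : 0 < δ) :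
    ∃ (U : ι → Set X) (V : ι → Set Y), (∀ i, IsOpen (U i)) ∧ (∀ i, IsOpen (V i)) ∧
      (∀ i, p i ∈ U i ×ˢ V i) ∧
      ∀ i j, ∀ q ∈ U i ×ˢ V j, |c q - c ((p i).1, (p j).2)| ≤ δ := by
  have near (i j : ι) : {q | |c q - c ((p i).1, (p j).2)| ≤ δ} ∈ nhds ((p i).1, (p j).2) :=
    hc.continuousAt (Metric.closedBall_mem_nhds _ hδ)
  choose U V hU hpU hV hpV hUV using fun i j ↦ mem_nhds_prod_iff'.1 (near i j)
  refine ⟨fun i ↦ ⋂ j, U i j, fun j ↦ ⋂ i, V i j, fun i ↦ isOpen_iInter_of_finite (hU i),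
    fun j ↦ isOpen_iInter_of_finite fun i ↦ hV i j,
    fun i ↦ ⟨Set.mem_iInter.2 (hpU i), Set.mem_iInter.2 fun j ↦ hpV j i⟩, fun i j q hq ↦ ?_⟩
  exact hUV i j ⟨Set.mem_iInter.1 hq.1 j, Set.mem_iInter.1 hq.2 i⟩

theorem IsOptimalPlan.isCyclicallyMonotone_support {X Y : Type*}
    [TopologicalSpace X] [SecondCountableTopology X] [MeasurableSpace X] [OpensMeasurableSpace X]
    [TopologicalSpace Y] [SecondCountableTopology Y] [MeasurableSpace Y] [OpensMeasurableSpace Y]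
    {c : X × Y → ℝ} {π : Measure (X × Y)} [IsFiniteMeasure π] (hπ : IsOptimalPlan c π)
    (hcont : Continuous c) (hc : Integrable c π) : IsCyclicallyMonotone c π.support := by
  intro n p σ hp
  have approx : ∀ δ > 0, ∑ i, c (p i) ≤ ∑ i, c ((p (σ i)).1, (p i).2) + 2 * n * δ := by
    intro δ hδ
    obtain ⟨U, V, hU, hV, hpUV, hcUV⟩ := exists_isOpen_forall_abs_sub_le hcont p hδ
    have hpos (i : Fin n) : π (U i ×ˢ V i) ≠ 0 :=
      ((Measure.mem_support_iff_forall _).1 (hp i) _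
        (((hU i).prod (hV i)).mem_nhds (hpUV i))).ne'
    have := hπ.sum_sub_le_sum_add_of_abs_sub_le hc hcont.measurable (fun i ↦ (hU i).measurableSet)
      (fun i ↦ (hV i).measurableSet) hpos hcUV σ
    simp only [Finset.sum_sub_distrib, Finset.sum_add_distrib, Finset.sum_const, Finset.card_univ,
      Fintype.card_fin, nsmul_eq_mul, Prod.mk.eta] at this
    linarith
  have limit : Filter.Tendsto (fun δ : ℝ ↦ ∑ i, c ((p (σ i)).1, (p i).2) + 2 * n * δ)
      (nhdsWithin 0 (Set.Ioi 0)) (nhds (∑ i, c ((p (σ i)).1, (p i).2))) := by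
    refine (Continuous.tendsto' ?_ 0 _ (by simp)).mono_left nhdsWithin_le_nhds
    fun_prop
  exact ge_of_tendsto limit (eventually_mem_nhdsWithin.mono approx)

lemma integral_sub_of_integrable_marginals {X Y : Type*} [MeasurableSpace X] [MeasurableSpace Y]
    {π : Measure (X × Y)} {g : X → ℝ} {h : Y → ℝ} (hg : Integrable g π.fst)
    (hh : Integrable h π.snd) :
    ∫ p, (g p.1 - h p.2) ∂π = ∫ x, g x ∂π.fst - ∫ y, h y ∂π.snd := by
  rw [Measure.fst, Measure.snd, integral_map measurable_fst.aemeasurable hg.aestronglyMeasurable,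
    integral_map measurable_snd.aemeasurable hh.aestronglyMeasurable]
  exact integral_sub (hg.comp_measurable measurable_fst) (hh.comp_measurable measurable_snd)

section ComplementarySlackness

variable {X : Type*} [PseudoMetricSpace X] [SecondCountableTopology X] [MeasurableSpace X]
  [OpensMeasurableSpace X] {o : X}

lemma integrable_of_lipschitzWith {F : Type*} [NormedAddCommGroup F] {μ : Measure X}
    [IsFiniteMeasure μ] {K : NNReal} {g : X → F} (hg : LipschitzWith K g)
    (hμ : Integrable (fun x ↦ dist x o) μ) : Integrable g μ := by
  refine ((integrable_const ‖g o‖).add (hμ.const_mul K)).mono'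
    hg.continuous.aestronglyMeasurable (.of_forall fun x ↦ ?_)
  calc ‖g x‖ ≤ ‖g o‖ + ‖g x - g o‖ := norm_le_norm_add_norm_sub' _ _
    _ ≤ ‖g o‖ + K * dist x o := by
      rw [← dist_eq_norm]
      gcongr
      exact hg.dist_le_mul x o

variable {π : Measure (X × X)}

lemma integrable_dist_of_integrable_marginals (hμ : Integrable (fun x ↦ dist x o) π.fst)
    (hν : Integrable (fun x ↦ dist x o) π.snd) : Integrable (fun p ↦ dist p.1 p.2) π :=
  ((hμ.comp_measurable measurable_fst).add (hν.comp_measurable measurable_snd)).mono'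
    continuous_dist.aestronglyMeasurable (.of_forall fun p ↦ by
      simpa using dist_triangle_right p.1 p.2 o)

theorem IsOptimalPlan.exists_lipschitzWith_ae_sub_eq_dist [IsFiniteMeasure π]
    (hπ : IsOptimalPlan (fun p ↦ dist p.1 p.2) π) (hint : Integrable (fun p ↦ dist p.1 p.2) π) :
    ∃ g : X → ℝ, LipschitzWith 1 g ∧ ∀ᵐ p ∂π, g p.1 - g p.2 = dist p.1 p.2 := by
  obtain ⟨g, hg, hg_support⟩ :=
    (hπ.isCyclicallyMonotone_support continuous_dist hint).exists_lipschitzWith_sub_eq_dist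
  exact ⟨g, hg, Filter.mem_of_superset Measure.support_mem_ae hg_support⟩

theorem IsOptimalPlan.ae_sub_eq_dist_of_optimal_critic [IsFiniteMeasure π]
    (hπ : IsOptimalPlan (fun p ↦ dist p.1 p.2) π) (hμ : Integrable (fun x ↦ dist x o) π.fst)
    (hν : Integrable (fun x ↦ dist x o) π.snd) {f : X → ℝ} (hf : LipschitzWith 1 f)
    (hfopt : ∀ g : X → ℝ, LipschitzWith 1 g →
      ∫ x, g x ∂π.fst - ∫ x, g x ∂π.snd ≤ ∫ x, f x ∂π.fst - ∫ x, f x ∂π.snd) :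
    ∀ᵐ p ∂π, f p.1 - f p.2 = dist p.1 p.2 := by
  have hint := integrable_dist_of_integrable_marginals hμ hν
  obtain ⟨g, hg, hg_ae⟩ := hπ.exists_lipschitzWith_ae_sub_eq_dist hint
  have dual_value {h : X → ℝ} (hh : LipschitzWith 1 h) :
      ∫ p, (h p.1 - h p.2) ∂π = ∫ x, h x ∂π.fst - ∫ x, h x ∂π.snd :=
    integral_sub_of_integrable_marginals (integrable_of_lipschitzWith hh hμ)
      (integrable_of_lipschitzWith hh hν)
  have hf_int : Integrable (fun p : X × X ↦ f p.1 - f p.2) π :=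
    ((integrable_of_lipschitzWith hf hμ).comp_measurable measurable_fst).sub
      ((integrable_of_lipschitzWith hf hν).comp_measurable measurable_snd)
  have hle : ∀ᵐ p ∂π, f p.1 - f p.2 ≤ dist p.1 p.2 :=
    .of_forall fun p ↦ sub_le_dist_of_lipschitzWith_one hf p.1 p.2
  refine (integral_eq_iff_of_ae_le hf_int hint hle).1 ?_
  refine (integral_mono_ae hf_int hint hle).antisymm ?_
  calc ∫ p, dist p.1 p.2 ∂π = ∫ p, (g p.1 - g p.2) ∂π := (integral_congr_ae hg_ae).symm
    _ = ∫ x, g x ∂π.fst - ∫ x, g x ∂π.snd := dual_value hg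
    _ ≤ ∫ x, f x ∂π.fst - ∫ x, f x ∂π.snd := hfopt g hg
    _ = ∫ p, (f p.1 - f p.2) ∂π := (dual_value hf).symm

end ComplementarySlackness

section Saturation

open AffineMap

variable {E : Type*} [NormedAddCommGroup E] [NormedSpace ℝ E] {f : E → ℝ} {x y : E} {t : ℝ}

lemma apply_lineMap_of_sub_eq_dist (hf : LipschitzWith 1 f) (hxy : f x - f y = dist x y)
    (ht : t ∈ Set.Icc (0 : ℝ) 1) : f (lineMap y x t) = f y + t * dist x y := by
  have upper : f (lineMap y x t) - f y ≤ t * dist x y := by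
    simpa [abs_of_nonneg ht.1, dist_comm y x] using
      sub_le_dist_of_lipschitzWith_one hf (lineMap y x t) y
  have lower : f x - f (lineMap y x t) ≤ (1 - t) * dist x y := by
    simpa [abs_of_nonneg (sub_nonneg.2 ht.2), dist_comm y x] using
      sub_le_dist_of_lipschitzWith_one hf x (lineMap y x t)
  linarith

lemma fderiv_lineMap_apply_of_sub_eq_dist (hf : LipschitzWith 1 f) (hxy : f x - f y = dist x y)
    (ht : t ∈ Set.Ioo (0 : ℝ) 1) (hdiff : DifferentiableAt ℝ f (lineMap y x t)) :
    fderiv ℝ f (lineMap y x t) (x - y) = dist x y := by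
  have chain_rule : HasDerivAt (fun s : ℝ ↦ f (lineMap y x s))
      (fderiv ℝ f (lineMap y x t) (x - y)) t :=
    hdiff.hasFDerivAt.comp_hasDerivAt t hasDerivAt_lineMap
  have affine : HasDerivAt (fun s : ℝ ↦ f y + s * dist x y) (dist x y) t := by
    simpa using ((hasDerivAt_id t).mul_const (dist x y)).const_add (f y)
  refine chain_rule.unique (affine.congr_of_eventuallyEq ?_)
  filter_upwards [Ioo_mem_nhds ht.1 ht.2] with s hs
  exact apply_lineMap_of_sub_eq_dist hf hxy (Set.Ioo_subset_Icc_self hs)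

theorem norm_fderiv_lineMap_eq_one_of_sub_eq_dist (hf : LipschitzWith 1 f) (hne : x ≠ y)
    (hxy : f x - f y = dist x y) (ht : t ∈ Set.Ioo (0 : ℝ) 1)
    (hdiff : DifferentiableAt ℝ f (lineMap y x t)) : ‖fderiv ℝ f (lineMap y x t)‖ = 1 := by
  refine le_antisymm (by simpa using norm_fderiv_le_of_lipschitz ℝ hf) ?_
  refine le_of_mul_le_mul_right ?_ (dist_pos.2 hne)
  calc 1 * dist x y = ‖fderiv ℝ f (lineMap y x t) (x - y)‖ := by
        rw [fderiv_lineMap_apply_of_sub_eq_dist hf hxy ht hdiff, Real.norm_of_nonneg dist_nonneg,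
          one_mul]
    _ ≤ ‖fderiv ℝ f (lineMap y x t)‖ * dist x y := by
        rw [dist_eq_norm]
        exact ContinuousLinearMap.le_opNorm _ _

end Saturation

theorem gradient_norm_of_optimal_critic_eq_one_general {E : Type*} [NormedAddCommGroup E]
    [NormedSpace ℝ E] [SecondCountableTopology E] [MeasurableSpace E] [OpensMeasurableSpace E]
    {π : Measure (E × E)} [IsFiniteMeasure π]
    (hμ : Integrable (fun x ↦ ‖x‖) π.fst) (hν : Integrable (fun x ↦ ‖x‖) π.snd)
    {f : E → ℝ} (hf : LipschitzWith 1 f)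
    (hfopt : ∀ g : E → ℝ, LipschitzWith 1 g →
      ∫ x, g x ∂π.fst - ∫ x, g x ∂π.snd ≤ ∫ x, f x ∂π.fst - ∫ x, f x ∂π.snd)
    (hπ : IsOptimalPlan (fun p ↦ ‖p.1 - p.2‖) π) :
    ∀ᵐ p ∂π, p.1 ≠ p.2 → ∀ t ∈ Set.Ioo (0 : ℝ) 1,
      DifferentiableAt ℝ f (t • p.1 + (1 - t) • p.2) →
        ‖fderiv ℝ f (t • p.1 + (1 - t) • p.2)‖ = 1 := by
  simp only [← dist_eq_norm] at hπ
  simp only [← dist_zero_right] at hμ hν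
  filter_upwards [hπ.ae_sub_eq_dist_of_optimal_critic hμ hν hf hfopt] with p hp hne t ht
  rw [add_comm, ← AffineMap.lineMap_apply_module]
  exact norm_fderiv_lineMap_eq_one_of_sub_eq_dist hf hne hp ht

/-- **Gradient-norm-one property of a differentiable optimal critic.**
For an everywhere differentiable optimal 1-Lipschitz critic `f*` and an optimal
coupling `π*`, for `π*`-almost every `(x, y)` with `x ≠ y` and every `t ∈ (0,1)`,
the gradient of `f*` at `x_t = t·x + (1−t)·y` has Euclidean norm 1. -/
theorem gradient_norm_of_optimal_critic_eq_one (n : ℕ)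
    (μ ν : Measure (EuclideanSpace ℝ (Fin n)))
    [IsProbabilityMeasure μ] [IsProbabilityMeasure ν]
    (hμ : Integrable (fun x => ‖x‖) μ) (hν : Integrable (fun x => ‖x‖) ν)
    (f : EuclideanSpace ℝ (Fin n) → ℝ) (hf : LipschitzWith 1 f)
    (hfopt : ∀ g : EuclideanSpace ℝ (Fin n) → ℝ, LipschitzWith 1 g →
        ∫ x, g x ∂μ - ∫ x, g x ∂ν ≤ ∫ x, f x ∂μ - ∫ x, f x ∂ν)
    (hdiff : Differentiable ℝ f)
    (πs : Measure (EuclideanSpace ℝ (Fin n) × EuclideanSpace ℝ (Fin n)))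
    [IsProbabilityMeasure πs]
    (hπ₁ : πs.map Prod.fst = μ) (hπ₂ : πs.map Prod.snd = ν)
    (hπopt : ∀ π : Measure (EuclideanSpace ℝ (Fin n) × EuclideanSpace ℝ (Fin n)),
        IsProbabilityMeasure π → π.map Prod.fst = μ → π.map Prod.snd = ν →
          ∫ p, ‖p.1 - p.2‖ ∂πs ≤ ∫ p, ‖p.1 - p.2‖ ∂π) :
    ∀ᵐ p ∂πs, p.1 ≠ p.2 → ∀ t ∈ Set.Ioo (0 : ℝ) 1,
      ‖gradient f (t • p.1 + (1 - t) • p.2)‖ = 1 := by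
  subst hπ₁ hπ₂
  have hplan : IsOptimalPlan (fun p ↦ ‖p.1 - p.2‖) πs := fun π hfst hsnd _ ↦
    hπopt π ⟨by rw [← Measure.fst_univ, hfst, Measure.fst_univ, measure_univ]⟩ hfst hsnd
  filter_upwards [gradient_norm_of_optimal_critic_eq_one_general hμ hν hf hfopt hplan]
    with p hp hne t ht
  simpa [gradient] using hp hne t ht (hdiff _)
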